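/- Let f(x) = x². The in-degrees of the q-Jaco graph are stepwise consecutive: for every k ∈ ℕ, d⁻(v_{k+1}) equals either d⁻(v_k) or d⁻(v_k) + 1. -/

import Mathlib

/-- In-degree of vertex `v_j` in the (root) Jaco graph with incidence function `f`:
`d⁻(v_j) = |{ i : 1 ≤ i < j, i + f i − d⁻(v_i) ≥ j }|`. -/
noncomputable def jacoIn (f : ℕ → ℕ) (j : ℕ) : ℕ :=
  Nat.strongRecOn j (fun j ih =>
    (((Finset.Ico 1 j).attach).filter (fun i : {x // x ∈ Finset.Ico 1 j} =>
      j ≤ i.1 + f i.1 - ih i.1 (Finset.mem_Ico.mp i.2).2)).card)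

/-- The arc `(v_i, v_j)` is present in the Jaco graph iff `1 ≤ i < j` and
`i + f i − d⁻(v_i) ≥ j`. -/
def jacoArc (f : ℕ → ℕ) (i j : ℕ) : Prop :=
  1 ≤ i ∧ i < j ∧ j ≤ i + f i - jacoIn f i

noncomputable instance (f : ℕ → ℕ) (i j : ℕ) : Decidable (jacoArc f i j) := by
  unfold jacoArc; infer_instance

/-- The underlying undirected simple graph `J*_n(f)` of the finite Jaco graph `J_n(f)`,
on vertex set `{v_1, …, v_n}` (vertex `x : Fin n` represents `v_{x+1}`). -/
def jacoGraph (f : ℕ → ℕ) (n : ℕ) : SimpleGraph (Fin n) :=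
  SimpleGraph.fromRel (fun x y => jacoArc f (x.1 + 1) (y.1 + 1))

noncomputable instance (f : ℕ → ℕ) (n : ℕ) : DecidableRel (jacoGraph f n).Adj := fun x y =>
  decidable_of_iff
    (x ≠ y ∧ (jacoArc f (x.1 + 1) (y.1 + 1) ∨ jacoArc f (y.1 + 1) (x.1 + 1)))
    (by unfold jacoGraph; exact (SimpleGraph.fromRel_adj (fun a b : Fin n => jacoArc f (a.1 + 1) (b.1 + 1)) x y).symm)

theorem jacoIn_eq (f : ℕ → ℕ) (j : ℕ) :
    jacoIn f j = ((Finset.Ico 1 j).filter (fun i => j ≤ i + f i - jacoIn f i)).card := by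
  have h : jacoIn f j = (((Finset.Ico 1 j).attach).filter
      (fun i : {x // x ∈ Finset.Ico 1 j} => j ≤ i.1 + f i.1 - jacoIn f i.1)).card := by
    conv_lhs => unfold jacoIn
    rw [Nat.strongRecOn_eq]
    rfl
  rw [h]
  refine Finset.card_bij (fun a _ => a.1) ?_ ?_ ?_
  · intro a ha
    exact Finset.mem_filter.mpr ⟨a.2, (Finset.mem_filter.mp ha).2⟩
  · intro a _ b _ hab
    exact Subtype.ext hab
  · intro b hb
    obtain ⟨h1, h2⟩ := Finset.mem_filter.mp hb
    exact ⟨⟨b, h1⟩, Finset.mem_filter.mpr ⟨Finset.mem_attach _ _, h2⟩, rfl⟩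

theorem jacoIn_le (f : ℕ → ℕ) (j : ℕ) : jacoIn f j ≤ j - 1 := by
  rw [jacoIn_eq]
  exact (Finset.card_filter_le _ _).trans (by simp)

/-- The reach of a vertex is strictly increasing. -/
theorem reach_lt (a b : ℕ) (ha : 1 ≤ a) (hab : a < b) :
    a + a ^ 2 - jacoIn (fun x => x ^ 2) a < b + b ^ 2 - jacoIn (fun x => x ^ 2) b := by
  have h := jacoIn_le (fun x => x ^ 2) b
  have h2 : a + a ^ 2 < b ^ 2 := by nlinarith
  omega

/-- For `f(x) = x²`, the in-degrees of the q-Jaco graph are stepwise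
consecutive: for every `k ∈ ℕ` (`k ≥ 1`), `d⁻(v_{k+1})` equals `d⁻(v_k)` or
`d⁻(v_k) + 1`. -/
theorem qJaco_sq_indegrees_stepwise (k : ℕ) (hk : 1 ≤ k) :
    jacoIn (fun x => x ^ 2) (k + 1) = jacoIn (fun x => x ^ 2) k ∨
    jacoIn (fun x => x ^ 2) (k + 1) = jacoIn (fun x => x ^ 2) k + 1 := by
  set d := jacoIn (fun x => x ^ 2) with hd
  set S := (Finset.Ico 1 k).filter (fun i => k ≤ i + i ^ 2 - d i) with hS
  set T := S.filter (fun i => i + i ^ 2 - d i = k) with hT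
  have e1 : d k = S.card := jacoIn_eq _ k
  have hkd : d k ≤ k - 1 := jacoIn_le _ k
  have hk2 : k ≤ k ^ 2 := by nlinarith
  have e2 : d (k + 1) = (insert k (S.filter (fun i => ¬ (i + i ^ 2 - d i = k)))).card := by
    rw [hd, jacoIn_eq, ← hd]
    congr 1
    ext i
    simp only [hS, Finset.mem_filter, Finset.mem_insert, Finset.mem_Ico]
    constructor
    · intro h
      omega
    · rintro (h | h)
      · subst h
        omega
      · omega
  rw [Finset.card_insert_of_notMem (by simp [hS])] at e2
  have e3 := Finset.card_filter_add_card_filter_not (s := S) (fun i => i + i ^ 2 - d i = k)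
  have e4 : T.card ≤ 1 := by
    rw [Finset.card_le_one]
    intro a ha b hb
    simp only [hT, hS, Finset.mem_filter, Finset.mem_Ico] at ha hb
    rcases lt_trichotomy a b with h | h | h
    · have := reach_lt a b (by omega) h
      rw [← hd] at this
      omega
    · exact h
    · have := reach_lt b a (by omega) h
      rw [← hd] at this
      omega
  rw [← hT] at e3
  omega
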